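/- Under the Setup, if equations (36d), (36e), (36f) hold on O, then equations (Ya) and (Yb) hold on O. -/

import Mathlib

open Real

/-- Partial derivative in the first coordinate `ϖ`. -/
noncomputable def d1 (f : ℝ × ℝ → ℝ) : ℝ × ℝ → ℝ := fun p => fderiv ℝ f p (1, 0)

/-- Partial derivative in the second coordinate `z`. -/
noncomputable def d3 (f : ℝ × ℝ → ℝ) : ℝ × ℝ → ℝ := fun p => fderiv ℝ f p (0, 1)

/-!
The quadratic terms of the Ricci components are values of the polarisation of `f l + k ^ 2`
on the differentials of the metric coefficients `f`, `k`, `l`. Substituting the exponential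
parametrisation produces cross terms in `dF` and `dΠ`, and these cancel exactly against the
contribution of `-2 F` to `m`, leaving an identity in `F, A, Π, K` that is bilinear in the
two directions. Its trace-free part is (Ya) and (Yb): the second derivatives of `m` and the
source enter `R₁₁` and `R₃₃` equally, so they drop out of `R₁₁ - R₃₃`.
-/

section DirectionalDerivative

variable {V : Type*} [NormedAddCommGroup V] [NormedSpace ℝ V]

/-- Directional derivative `∂_v f`, the common form of `d1` and `d3`. -/
noncomputable def dirDeriv (v : V) (f : V → ℝ) : V → ℝ := fun x => fderiv ℝ f x v

local notation "∂[" v "]" => dirDeriv v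

/-- The coefficient `f = -g₀₀` of the stationary axisymmetric metric
`-e^{2F} (dx⁰ + A dφ)² + e^{-2F} (Π² dφ² + e^{2K} (dϖ² + dz²))`, where `Π` is
written `Pt` in the code. -/
noncomputable def lewisF (F : V → ℝ) : V → ℝ := fun x => exp (2 * F x)

/-- The coefficient `k = g₀₂` of the metric described at `lewisF`. -/
noncomputable def lewisK (F A : V → ℝ) : V → ℝ := fun x => -exp (2 * F x) * A x

/-- The coefficient `l = g₂₂` of the metric described at `lewisF`. -/
noncomputable def lewisL (F A Pt : V → ℝ) : V → ℝ := fun x =>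
  -exp (2 * F x) * A x ^ 2 + exp (-(2 * F x)) * Pt x ^ 2

/-- The logarithm `m` of the coefficient `g₁₁ = g₃₃` of the metric described at `lewisF`. -/
noncomputable def lewisM (F K : V → ℝ) : V → ℝ := fun x => 2 * (-F x + K x)

/-- Polarisation of the quadratic form `f l + k ^ 2` on the differentials of `f`, `k`, `l`.
It gives the terms of the Ricci components quadratic in these differentials. -/
noncomputable def killingPolar (f k l : V → ℝ) (x u v : V) : ℝ :=
  (∂[u] f x * ∂[v] l x + ∂[v] f x * ∂[u] l x) / 2 + ∂[u] k x * ∂[v] k x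

/-- The Ricci component `R(u, u)` in a meridional plane with conformal coordinate directions
`u, v`; thus `R₁₁` and `R₃₃` differ by exchanging `u` and `v`. -/
noncomputable def ricciDiag (f k l m Pt : V → ℝ) (x u v : V) : ℝ :=
  (-∂[u] (∂[u] m) x - ∂[v] (∂[v] m) x - 2 * ∂[u] (∂[u] Pt) x / Pt x
    + (∂[u] m x * ∂[u] Pt x - ∂[v] m x * ∂[v] Pt x) / Pt x
    + killingPolar f k l x u u / Pt x ^ 2) / 2

/-- The Ricci component `R(u, v)` for two distinct conformal coordinate directions of the
meridional plane; `R₁₃` in the coordinates `(ϖ, z)`. -/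
noncomputable def ricciMixed (f k l m Pt : V → ℝ) (x u v : V) : ℝ :=
  (-(2 * ∂[u] (∂[v] Pt) x / Pt x)
    + (∂[v] m x * ∂[u] Pt x + ∂[u] m x * ∂[v] Pt x) / Pt x
    + killingPolar f k l x u v / Pt x ^ 2) / 2

/-- `Π` times the part of the meridional Ricci tensor that is not pure trace. -/
noncomputable def ricciCore (f k l m Pt : V → ℝ) (x u v : V) : ℝ :=
  -∂[u] (∂[v] Pt) x + (∂[u] m x * ∂[v] Pt x + ∂[v] m x * ∂[u] Pt x) / 2
    + killingPolar f k l x u v / (2 * Pt x)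

theorem ricciDiag_sub_ricciDiag_swap (f k l m Pt : V → ℝ) (x u v : V) :
    ricciDiag f k l m Pt x u v - ricciDiag f k l m Pt x v u =
      (ricciCore f k l m Pt x u u - ricciCore f k l m Pt x v v) / Pt x := by
  simp only [ricciDiag, ricciCore]
  ring

theorem ricciMixed_eq_ricciCore_div (f k l m Pt : V → ℝ) (x u v : V) :
    ricciMixed f k l m Pt x u v = ricciCore f k l m Pt x u v / Pt x := by
  simp only [ricciMixed, ricciCore]
  ring

variable {F A Pt K : V → ℝ} {x : V}

theorem dirDeriv_lewisF (hF : DifferentiableAt ℝ F x) (v : V) :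
    ∂[v] (lewisF F) x = 2 * exp (2 * F x) * ∂[v] F x := by
  have h : HasFDerivAt (lewisF F) _ x := (hF.hasFDerivAt.const_mul 2).exp
  simp only [dirDeriv, h.fderiv, smul_apply, smul_eq_mul]
  ring

theorem dirDeriv_lewisK (hF : DifferentiableAt ℝ F x) (hA : DifferentiableAt ℝ A x) (v : V) :
    ∂[v] (lewisK F A) x = -exp (2 * F x) * (2 * ∂[v] F x * A x + ∂[v] A x) := by
  have h : HasFDerivAt (lewisK F A) _ x :=
    (hF.hasFDerivAt.const_mul 2).exp.neg.mul hA.hasFDerivAt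
  simp only [dirDeriv, h.fderiv, add_apply, neg_apply, Pi.neg_apply, smul_apply, smul_eq_mul]
  ring

theorem dirDeriv_lewisL (hF : DifferentiableAt ℝ F x) (hA : DifferentiableAt ℝ A x)
    (hPt : DifferentiableAt ℝ Pt x) (v : V) :
    ∂[v] (lewisL F A Pt) x =
      -exp (2 * F x) * (2 * ∂[v] F x * A x ^ 2 + 2 * A x * ∂[v] A x)
        + exp (-(2 * F x)) * (2 * Pt x * ∂[v] Pt x - 2 * ∂[v] F x * Pt x ^ 2) := by
  have hexp := hF.hasFDerivAt.const_mul 2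
  have h : HasFDerivAt (lewisL F A Pt) _ x :=
    (hexp.exp.neg.mul (hA.hasFDerivAt.pow 2)).add (hexp.neg.exp.mul (hPt.hasFDerivAt.pow 2))
  simp only [dirDeriv, h.fderiv, add_apply, neg_apply, Pi.neg_apply, smul_apply, smul_eq_mul,
    nsmul_eq_mul]
  ring

theorem dirDeriv_lewisM (hF : DifferentiableAt ℝ F x) (hK : DifferentiableAt ℝ K x) (v : V) :
    ∂[v] (lewisM F K) x = 2 * (-∂[v] F x + ∂[v] K x) := by
  have h : HasFDerivAt (lewisM F K) _ x :=
    (hF.hasFDerivAt.neg.add hK.hasFDerivAt).const_mul 2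
  simp only [dirDeriv, h.fderiv, add_apply, neg_apply, smul_apply, smul_eq_mul]

theorem killingPolar_lewis (hF : DifferentiableAt ℝ F x) (hA : DifferentiableAt ℝ A x)
    (hPt : DifferentiableAt ℝ Pt x) (u v : V) :
    killingPolar (lewisF F) (lewisK F A) (lewisL F A Pt) x u v =
      -4 * Pt x ^ 2 * ∂[u] F x * ∂[v] F x
        + 2 * Pt x * (∂[u] F x * ∂[v] Pt x + ∂[v] F x * ∂[u] Pt x)
        + exp (4 * F x) * ∂[u] A x * ∂[v] A x := by
  have exp_mul_exp_neg : exp (2 * F x) * exp (-(2 * F x)) = 1 := by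
    rw [← exp_add, add_neg_cancel, exp_zero]
  have exp_four : exp (4 * F x) = exp (2 * F x) ^ 2 := by
    rw [← exp_nat_mul]
    ring_nf
  simp only [killingPolar, dirDeriv_lewisF hF, dirDeriv_lewisK hF hA, dirDeriv_lewisL hF hA hPt,
    exp_four]
  linear_combination (-4 * Pt x ^ 2 * ∂[u] F x * ∂[v] F x
    + 2 * Pt x * (∂[u] F x * ∂[v] Pt x + ∂[v] F x * ∂[u] Pt x)) * exp_mul_exp_neg

theorem ricciCore_lewis (hF : DifferentiableAt ℝ F x) (hA : DifferentiableAt ℝ A x)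
    (hPt : DifferentiableAt ℝ Pt x) (hK : DifferentiableAt ℝ K x) (hx : Pt x ≠ 0) (u v : V) :
    ricciCore (lewisF F) (lewisK F A) (lewisL F A Pt) (lewisM F K) Pt x u v =
      -∂[u] (∂[v] Pt) x + (∂[u] K x * ∂[v] Pt x + ∂[v] K x * ∂[u] Pt x)
        - 2 * Pt x * ∂[u] F x * ∂[v] F x
        + exp (4 * F x) / (2 * Pt x) * (∂[u] A x * ∂[v] A x) := by
  rw [ricciCore, killingPolar_lewis hF hA hPt, dirDeriv_lewisM hF hK, dirDeriv_lewisM hF hK]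
  field_simp
  ring

theorem stmt_2_general {u v : V} (hF : ContDiffAt ℝ 2 F x) (hA : DifferentiableAt ℝ A x)
    (hPt : ContDiffAt ℝ 2 Pt x) (hK : ContDiffAt ℝ 2 K x) (hx : Pt x ≠ 0)
    (hdiag : ricciDiag (lewisF F) (lewisK F A) (lewisL F A Pt) (lewisM F K) Pt x u v =
      ricciDiag (lewisF F) (lewisK F A) (lewisL F A Pt) (lewisM F K) Pt x v u)
    (hmixed : ricciMixed (lewisF F) (lewisK F A) (lewisL F A Pt) (lewisM F K) Pt x u v = 0) :
    (∂[u] Pt x * ∂[u] K x - ∂[v] Pt x * ∂[v] K x =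
      (1 / 2) * (∂[u] (∂[u] Pt) x - ∂[v] (∂[v] Pt) x)
        + Pt x * ((∂[u] F x) ^ 2 - (∂[v] F x) ^ 2)
        - (exp (4 * F x) / (4 * Pt x)) * ((∂[u] A x) ^ 2 - (∂[v] A x) ^ 2)) ∧
    (∂[v] Pt x * ∂[u] K x + ∂[u] Pt x * ∂[v] K x =
      ∂[u] (∂[v] Pt) x + 2 * Pt x * ∂[u] F x * ∂[v] F x
        - (exp (4 * F x) / (2 * Pt x)) * (∂[u] A x * ∂[v] A x)) := by
  have core_lewis := ricciCore_lewis (hF.differentiableAt two_ne_zero) hA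
    (hPt.differentiableAt two_ne_zero) (hK.differentiableAt two_ne_zero) hx
  rw [← sub_eq_zero, ricciDiag_sub_ricciDiag_swap, div_eq_zero_iff, or_iff_left hx,
    core_lewis, core_lewis] at hdiag
  rw [ricciMixed_eq_ricciCore_div, div_eq_zero_iff, or_iff_left hx, core_lewis] at hmixed
  constructor
  · linear_combination hdiag / 2
  · linear_combination hmixed

end DirectionalDerivative

theorem d1_eq_dirDeriv : d1 = dirDeriv (1, 0) := rfl

theorem d3_eq_dirDeriv : d3 = dirDeriv (0, 1) := rfl

/-- **(36d)(36e)(36f) ⟹ (Ya)(Yb).** -/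
theorem stmt_2
    (c κ : ℝ) (hc : 0 < c) (hκ : 0 < κ)
    (O : Set (ℝ × ℝ)) (hO : IsOpen O) (hOw : ∀ p ∈ O, 0 < p.1)
    (F A Pt K ρ P Ω : ℝ × ℝ → ℝ)
    (hF : ContDiffOn ℝ 2 F O) (hA : ContDiffOn ℝ 2 A O)
    (hPt : ContDiffOn ℝ 2 Pt O) (hK : ContDiffOn ℝ 2 K O)
    (hPtpos : ∀ p ∈ O, 0 < Pt p)
    (hρc : ContinuousOn ρ O) (hPc : ContinuousOn P O) (hΩc : ContinuousOn Ω O)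
    (hρ0 : ∀ p ∈ O, 0 ≤ ρ p) (hP0 : ∀ p ∈ O, 0 ≤ P p)
    (ε f k m l E Sg : ℝ × ℝ → ℝ)
    (hε : ε = fun p => c ^ 2 * ρ p)
    (hf : f = fun p => exp (2 * F p))
    (hk : k = fun p => -exp (2 * F p) * A p)
    (hm : m = fun p => 2 * (-F p + K p))
    (hl : l = fun p => -exp (2 * F p) * (A p) ^ 2 + exp (-(2 * F p)) * (Pt p) ^ 2)
    (hE : E = fun p => exp (2 * F p) * (1 + Ω p * A p / c) ^ 2
      - exp (-(2 * F p)) * (Ω p ^ 2 / c ^ 2) * (Pt p) ^ 2)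
    (hEpos : ∀ p ∈ O, 0 < E p)
    (hSg : Sg = fun p => d1 f p * d1 l p + d3 f p * d3 l p + (d1 k p) ^ 2 + (d3 k p) ^ 2)
    (R11 R33 R13 : ℝ × ℝ → ℝ)
    (hR11 : ∀ p ∈ O, 2 * R11 p =
      -(d1 (d1 m) p) - d3 (d3 m) p - 2 * d1 (d1 Pt) p / Pt p
        + (1 / Pt p) * (d1 m p * d1 Pt p - d3 m p * d3 Pt p)
        + (1 / (Pt p) ^ 2) * (d1 f p * d1 l p + (d1 k p) ^ 2))
    (hR33 : ∀ p ∈ O, 2 * R33 p =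
      -(d1 (d1 m) p) - d3 (d3 m) p - 2 * d3 (d3 Pt) p / Pt p
        - (1 / Pt p) * (d1 m p * d1 Pt p - d3 m p * d3 Pt p)
        + (1 / (Pt p) ^ 2) * (d3 f p * d3 l p + (d3 k p) ^ 2))
    (hR13 : ∀ p ∈ O, 2 * R13 p =
      -(2 * d1 (d3 Pt) p / Pt p)
        + (1 / Pt p) * (d3 m p * d1 Pt p + d1 m p * d3 Pt p)
        + (1 / (2 * (Pt p) ^ 2)) * (d1 f p * d3 l p + d1 l p * d3 f p + 2 * d1 k p * d3 k p))
    (S11 : ℝ × ℝ → ℝ)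
    (hS11 : S11 = fun p => (exp (m p) / 2) * (ε p - P p))
    (h36d : ∀ p ∈ O, R11 p = κ * S11 p)
    (h36e : ∀ p ∈ O, R33 p = κ * S11 p)
    (h36f : ∀ p ∈ O, R13 p = 0) :
    (∀ p ∈ O,
      d1 Pt p * d1 K p - d3 Pt p * d3 K p
      = (1/2) * (d1 (d1 Pt) p - d3 (d3 Pt) p)
        + Pt p * ((d1 F p) ^ 2 - (d3 F p) ^ 2)
        - (exp (4 * F p) / (4 * Pt p)) * ((d1 A p) ^ 2 - (d3 A p) ^ 2)) ∧
    (∀ p ∈ O,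
      d3 Pt p * d1 K p + d1 Pt p * d3 K p
      = d1 (d3 Pt) p + 2 * Pt p * d1 F p * d3 F p
        - (exp (4 * F p) / (2 * Pt p)) * (d1 A p * d3 A p)) := by
  obtain rfl : f = lewisF F := hf
  obtain rfl : k = lewisK F A := hk
  obtain rfl : l = lewisL F A Pt := hl
  obtain rfl : m = lewisM F K := hm
  simp only [d1_eq_dirDeriv, d3_eq_dirDeriv] at hR11 hR33 hR13 ⊢
  rw [← forall₂_and]
  intro p hp
  have hOp := hO.mem_nhds hp
  apply stmt_2_general (hF.contDiffAt hOp) ((hA.contDiffAt hOp).differentiableAt two_ne_zero)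
    (hPt.contDiffAt hOp) (hK.contDiffAt hOp) (hPtpos p hp).ne'
  · have isotropic : R11 p = R33 p := (h36d p hp).trans (h36e p hp).symm
    simp only [ricciDiag, killingPolar]
    linear_combination isotropic + (hR33 p hp - hR11 p hp) / 2
  · simp only [ricciMixed, killingPolar]
    linear_combination h36f p hp - hR13 p hp / 2
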